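/- arXiv:2106.13856 — 4 statements merged into one kernel-verified Lean document; each statement's English description precedes it below -/
import Mathlib

section
/- Under Assumption 1 on the value distribution and non-degenerate beliefs, the equilibrium bidding strategy β(v) = v − (∫_{v̲}^{v} A₁(G(x)) dx)/A₁(G(v)) satisfies β(v) < v and β'(v) > 0 for every v ∈ (v̲, v̄]; in particular, β is strictly increasing on (v̲, v̄]. (Bid shading and strict monotonicity of the equilibrium strategy.) -/
open MeasureTheory Set Filter

noncomputable section

/-- `A₁(u) = ∑_{m=1}^M p_m u^(m-1)`. -/
def A1 (M : ℕ) (p : ℕ → ℝ) (u : ℝ) : ℝ := ∑ m ∈ Finset.Icc 1 M, p m * u ^ (m - 1)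

/-- `A₂(u) = u A₁(u)`. -/
def A2 (M : ℕ) (p : ℕ → ℝ) (u : ℝ) : ℝ := u * A1 M p u

/-- `A₃(u) = (1-u) A₁(u)`. -/
def A3 (M : ℕ) (p : ℕ → ℝ) (u : ℝ) : ℝ := (1 - u) * A1 M p u

/-- `A(u) = A₁(u)/A₁'(u)`. -/
def Afun (M : ℕ) (p : ℕ → ℝ) (u : ℝ) : ℝ := A1 M p u / deriv (A1 M p) u

/-- Assumption 1: the value distribution `G` is a CDF supported on `[v̲, v̄]` with
`0 ≤ v̲ < v̄ < ∞`, twice continuously differentiable there, with density `g = G' > 0`. -/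
structure Assumption1 (G g : ℝ → ℝ) (vlo vhi : ℝ) : Prop where
  lo_nonneg : 0 ≤ vlo
  lo_lt_hi : vlo < vhi
  mono : Monotone G
  eq_zero : ∀ x ≤ vlo, G x = 0
  eq_one : ∀ x, vhi ≤ x → G x = 1
  smooth : ContDiffOn ℝ 2 G (Set.Icc vlo vhi)
  hasDeriv : ∀ x ∈ Set.Icc vlo vhi, HasDerivWithinAt G (g x) (Set.Icc vlo vhi) x
  density_pos : ∀ x ∈ Set.Icc vlo vhi, 0 < g x

/-- Non-degenerate symmetric beliefs `p₁, …, p_M` about the number of active bidders. -/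
structure Beliefs (M : ℕ) (p : ℕ → ℝ) : Prop where
  nonneg : ∀ m, 0 ≤ p m
  sum_one : ∑ m ∈ Finset.Icc 1 M, p m = 1
  nondegen : 0 < ∑ m ∈ Finset.Icc 2 M, p m


/-- The equilibrium bidding strategy `β(v) = v - (∫_{v̲}^v A₁(G(x)) dx)/A₁(G(v))`. -/
def betaRaw (M : ℕ) (p : ℕ → ℝ) (G : ℝ → ℝ) (vlo : ℝ) (x : ℝ) : ℝ :=
  x - (∫ t in vlo..x, A1 M p (G t)) / A1 M p (G x)

/-! With `F(v) = ∫_{v̲}^v A₁(G(x)) dx` and `f = A₁ ∘ G`, the strategy is `β = id - F / f` where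
`F' = f`, so the quotient rule collapses to `β' = F f' / f²`. Positivity of `F`, `f` and `f'` comes
from `G > 0` on `(v̲, v̄]`, since the density is positive, and from `A₁, A₁' > 0` on `(0, ∞)`, since
some `p_k` with `k ≥ 2` is positive. -/

theorem strictMonoOn_of_derivWithin_pos {D : Set ℝ} (hD : Convex ℝ D) {f : ℝ → ℝ}
    (hf' : ∀ x ∈ D, 0 < derivWithin f D x) : StrictMonoOn f D := by
  refine strictMonoOn_of_deriv_pos hD (fun x hx ↦ ?_) fun x hx ↦ ?_
  · exact (differentiableWithinAt_of_derivWithin_ne_zero (hf' x hx).ne').continuousWithinAt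
  · rw [← derivWithin_of_mem_nhds (mem_interior_iff_mem_nhds.mp hx)]
    exact hf' x (interior_subset hx)

theorem hasDerivWithinAt_id_sub_primitive_div {𝕜 : Type*} [NontriviallyNormedField 𝕜]
    {F f : 𝕜 → 𝕜} {f' x : 𝕜} {s : Set 𝕜} (hF : HasDerivWithinAt F (f x) s x)
    (hf : HasDerivWithinAt f f' s x) (hfx : f x ≠ 0) :
    HasDerivWithinAt (fun y ↦ y - F y / f y) (F x * f' / f x ^ 2) s x := by
  refine ((hasDerivWithinAt_id x s).sub (hF.div hf hfx)).congr_deriv ?_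
  field_simp
  ring

theorem hasDerivWithinAt_integral_of_continuousOn_Icc {E : Type*} [NormedAddCommGroup E]
    [NormedSpace ℝ E] [CompleteSpace E] {f : ℝ → E} {a b x : ℝ}
    (hf : ContinuousOn f (Icc a b)) (hx : x ∈ Icc a b) :
    HasDerivWithinAt (fun y ↦ ∫ t in a..y, f t) (f x) (Icc a b) x := by
  have : Fact (x ∈ Icc a b) := ⟨hx⟩
  have hint : IntervalIntegrable f volume a x :=
    (hf.mono (Icc_subset_Icc_right hx.2)).intervalIntegrable_of_Icc hx.1
  exact intervalIntegral.integral_hasDerivWithinAt_right hint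
    (hf.stronglyMeasurableAtFilter_nhdsWithin measurableSet_Icc x) (hf x hx)

section IntegralRatio

variable {f : ℝ → ℝ} {a b x : ℝ}

theorem integral_pos_of_pos_on_Ioc (hf : ContinuousOn f (Icc a b))
    (hpos : ∀ y ∈ Ioc a b, 0 < f y) (hx : x ∈ Ioc a b) : 0 < ∫ t in a..x, f t :=
  intervalIntegral.intervalIntegral_pos_of_pos_on
    ((hf.mono (Icc_subset_Icc_right hx.2)).intervalIntegrable_of_Icc hx.1.le)
    (fun y hy ↦ hpos y ⟨hy.1, hy.2.le.trans hx.2⟩) hx.1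

theorem sub_integral_div_lt_self (hf : ContinuousOn f (Icc a b))
    (hpos : ∀ y ∈ Ioc a b, 0 < f y) (hx : x ∈ Ioc a b) :
    x - (∫ t in a..x, f t) / f x < x :=
  sub_lt_self x (div_pos (integral_pos_of_pos_on_Ioc hf hpos hx) (hpos x hx))

theorem derivWithin_sub_integral_div_pos {f' : ℝ} (hf : ContinuousOn f (Icc a b))
    (hpos : ∀ y ∈ Ioc a b, 0 < f y) (hx : x ∈ Ioc a b)
    (hfx : HasDerivWithinAt f f' (Ioc a b) x) (hf' : 0 < f') :
    0 < derivWithin (fun y ↦ y - (∫ t in a..y, f t) / f y) (Ioc a b) x := by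
  have hprimitive : HasDerivWithinAt (fun y ↦ ∫ t in a..y, f t) (f x) (Ioc a b) x :=
    (hasDerivWithinAt_integral_of_continuousOn_Icc hf (Ioc_subset_Icc_self hx)).mono
      Ioc_subset_Icc_self
  have hfx_pos : 0 < f x := hpos x hx
  have hint_pos : 0 < ∫ t in a..x, f t := integral_pos_of_pos_on_Ioc hf hpos hx
  rw [(hasDerivWithinAt_id_sub_primitive_div hprimitive hfx hfx_pos.ne').derivWithin
    (uniqueDiffOn_Ioc a b x hx)]
  positivity

end IntegralRatio

theorem pos_of_hasDerivWithinAt_pos_of_nonneg_left {f f' : ℝ → ℝ} {a b x : ℝ}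
    (hf : ContinuousOn f (Icc a b)) (hff' : ∀ y ∈ Ioo a b, HasDerivWithinAt f (f' y) (Ioo a b) y)
    (hf' : ∀ y ∈ Ioo a b, 0 < f' y) (ha : 0 ≤ f a) (hx : x ∈ Ioc a b) : 0 < f x := by
  have hmono : StrictMonoOn f (Icc a b) :=
    strictMonoOn_of_hasDerivWithinAt_pos (convex_Icc a b) hf
      (by rwa [interior_Icc]) (by rwa [interior_Icc])
  exact ha.trans_lt
    (hmono (left_mem_Icc.mpr (hx.1.le.trans hx.2)) (Ioc_subset_Icc_self hx) hx.1)

section BeliefPolynomial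

theorem hasDerivAt_A1 (M : ℕ) (p : ℕ → ℝ) (u : ℝ) :
    HasDerivAt (A1 M p) (∑ m ∈ Finset.Icc 1 M, p m * ((m - 1 : ℕ) * u ^ (m - 1 - 1))) u :=
  HasDerivAt.fun_sum fun m _ ↦ (hasDerivAt_pow (m - 1) u).const_mul (p m)

theorem differentiable_A1 (M : ℕ) (p : ℕ → ℝ) : Differentiable ℝ (A1 M p) :=
  fun u ↦ (hasDerivAt_A1 M p u).differentiableAt

variable {M k : ℕ} {p : ℕ → ℝ} {u : ℝ}

theorem A1_pos (hp : ∀ m ∈ Finset.Icc 1 M, 0 ≤ p m) (hk : k ∈ Finset.Icc 1 M) (hpk : 0 < p k)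
    (hu : 0 < u) : 0 < A1 M p u :=
  Finset.sum_pos' (fun m hm ↦ mul_nonneg (hp m hm) (by positivity)) ⟨k, hk, by positivity⟩

theorem deriv_A1_pos (hp : ∀ m ∈ Finset.Icc 1 M, 0 ≤ p m) (hk : k ∈ Finset.Icc 2 M)
    (hpk : 0 < p k) (hu : 0 < u) : 0 < deriv (A1 M p) u := by
  rw [(hasDerivAt_A1 M p u).deriv]
  refine Finset.sum_pos' (fun m hm ↦ mul_nonneg (hp m hm) (by positivity))
    ⟨k, Finset.Icc_subset_Icc_left one_le_two hk, ?_⟩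
  have hexp : 0 < k - 1 := Nat.sub_pos_of_lt (Finset.mem_Icc.mp hk).1
  positivity

end BeliefPolynomial

theorem bid_shading_and_strict_monotonicity_general
    (M : ℕ) (p : ℕ → ℝ) (hp : ∀ m ∈ Finset.Icc 1 M, 0 ≤ p m)
    (hnondegen : 0 < ∑ m ∈ Finset.Icc 2 M, p m)
    (G g : ℝ → ℝ) (vlo vhi : ℝ) (hG : ContinuousOn G (Icc vlo vhi)) (hlo : 0 ≤ G vlo)
    (hderiv : ∀ x ∈ Ioc vlo vhi, HasDerivWithinAt G (g x) (Ioc vlo vhi) x)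
    (hg : ∀ x ∈ Ioc vlo vhi, 0 < g x) :
    (∀ v ∈ Ioc vlo vhi,
      betaRaw M p G vlo v < v ∧ 0 < derivWithin (betaRaw M p G vlo) (Ioc vlo vhi) v) ∧
    StrictMonoOn (betaRaw M p G vlo) (Ioc vlo vhi) := by
  obtain ⟨k, hk, hpk⟩ : ∃ k ∈ Finset.Icc 2 M, 0 < p k :=
    Finset.exists_lt_of_sum_lt (by simpa only [Finset.sum_const_zero] using hnondegen)
  have hG_pos : ∀ v ∈ Ioc vlo vhi, 0 < G v := fun v hv ↦
    pos_of_hasDerivWithinAt_pos_of_nonneg_left hG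
      (fun x hx ↦ (hderiv x (Ioo_subset_Ioc_self hx)).mono Ioo_subset_Ioc_self)
      (fun x hx ↦ hg x (Ioo_subset_Ioc_self hx)) hlo hv
  have hcont : ContinuousOn (A1 M p ∘ G) (Icc vlo vhi) :=
    (differentiable_A1 M p).continuous.comp_continuousOn hG
  have hpos : ∀ v ∈ Ioc vlo vhi, 0 < (A1 M p ∘ G) v := fun v hv ↦
    A1_pos hp (Finset.Icc_subset_Icc_left one_le_two hk) hpk (hG_pos v hv)
  have hbeta' : ∀ v ∈ Ioc vlo vhi, 0 < derivWithin (betaRaw M p G vlo) (Ioc vlo vhi) v :=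
    fun v hv ↦ derivWithin_sub_integral_div_pos hcont hpos hv
      ((differentiable_A1 M p (G v)).hasDerivAt.comp_hasDerivWithinAt v (hderiv v hv))
      (mul_pos (deriv_A1_pos hp hk hpk (hG_pos v hv)) (hg v hv))
  exact ⟨fun v hv ↦ ⟨sub_integral_div_lt_self hcont hpos hv, hbeta' v hv⟩,
    strictMonoOn_of_derivWithin_pos (convex_Ioc vlo vhi) hbeta'⟩

/-- Bid shading and strict monotonicity of the equilibrium strategy: `β(v) < v` and
`β'(v) > 0` for every `v ∈ (v̲, v̄]`; in particular `β` is strictly increasing there. -/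
theorem bid_shading_and_strict_monotonicity
    (M : ℕ) (p : ℕ → ℝ) (hM : 2 ≤ M) (hbel : Beliefs M p)
    (G g : ℝ → ℝ) (vlo vhi : ℝ) (hG : Assumption1 G g vlo vhi) :
    (∀ v ∈ Set.Ioc vlo vhi,
      betaRaw M p G vlo v < v ∧
        0 < derivWithin (betaRaw M p G vlo) (Set.Ioc vlo vhi) v) ∧
    StrictMonoOn (betaRaw M p G vlo) (Set.Ioc vlo vhi) :=
  bid_shading_and_strict_monotonicity_general M p (fun m _ ↦ hbel.nonneg m) hbel.nondegen
    G g vlo vhi (fun x hx ↦ (hG.hasDeriv x hx).continuousWithinAt) (hG.eq_zero vlo le_rfl).ge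
    (fun x hx ↦ (hG.hasDeriv x (Ioc_subset_Icc_self hx)).mono Ioc_subset_Icc_self)
    fun x hx ↦ hG.density_pos x (Ioc_subset_Icc_self hx)
end
end

section
/- Under Assumption 1 on the value distribution and non-degenerate beliefs, suppose β : [v̲, v̄] → ℝ is continuously differentiable and strictly increasing with β'(v) > 0 on (v̲, v̄], and satisfies the first-order condition β'(v) = (v − β(v))·g(v)/A(G(v)) for all v ∈ (v̲, v̄]. Let F = G ∘ β⁻¹ be the CDF of the equilibrium bid on [β(v̲), β(v̄)], with density f = F'. Then for every bid b ∈ (β(v̲), β(v̄)], the bidder's value is recovered by the inverse bidding strategy formula β⁻¹(b) = b + A(F(b))/f(b). (Identification equation (iden1).) -/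
open MeasureTheory Set Filter

noncomputable section

theorem smul_eq_of_hasDerivWithinAt_comp_leftInvOn {𝕜 E : Type*} [NontriviallyNormedField 𝕜]
    [NormedAddCommGroup E] [NormedSpace 𝕜 E] {φ φinv : 𝕜 → 𝕜} {h : 𝕜 → E} {s t : Set 𝕜}
    {x φ' : 𝕜} {h' k' : E} (hs : UniqueDiffWithinAt 𝕜 s x) (hx : x ∈ s) (hmaps : MapsTo φ s t)
    (hinv : LeftInvOn φinv φ s) (hφ : HasDerivWithinAt φ φ' s x)
    (hh : HasDerivWithinAt h h' s x) (hk : HasDerivWithinAt (h ∘ φinv) k' t (φ x)) :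
    φ' • k' = h' := by
  have hchain : HasDerivWithinAt ((h ∘ φinv) ∘ φ) (φ' • k') s x := hk.scomp x hφ hmaps
  have hcancel : EqOn h ((h ∘ φinv) ∘ φ) s := fun z hz => (congrArg h (hinv hz)).symm
  exact hs.eq_deriv s (hchain.congr hcancel (hcancel hx)) hh

theorem mul_eq_of_eq_div_of_ne_zero {G₀ : Type*} [GroupWithZero G₀] {a b c : G₀}
    (h : a = b / c) (ha : a ≠ 0) : a * c = b := by
  -- Since `b / 0 = 0`, the denominator of a nonzero quotient is nonzero.
  have hc : c ≠ 0 := (div_ne_zero_iff.1 (h ▸ ha)).2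
  exact (eq_div_iff hc).1 h

theorem eq_add_div_of_mul_eq_sub_mul_mul {K : Type*} [Field K] {v b a f d : K}
    (hdf : d * f ≠ 0) (h : d * a = (v - b) * (d * f)) : v = b + a / f := by
  obtain ⟨hd, hf⟩ := mul_ne_zero_iff.1 hdf
  have ha : a = (v - b) * f := mul_left_cancel₀ hd (h.trans (mul_left_comm _ _ _))
  rw [ha, mul_div_cancel_right₀ _ hf, add_sub_cancel]

/-- Differentiating `G = F ∘ β` with `F = G ∘ β⁻¹` gives `g = β' · (f ∘ β)`, so the factor `β'`
cancels from the first-order condition and leaves `A ∘ F ∘ β = (id - β) · (f ∘ β)`. -/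
theorem inverse_bidding_strategy_identification_general
    {A G g β βd βinv f : ℝ → ℝ} {vlo vhi : ℝ}
    (hG : ∀ v ∈ Icc vlo vhi, HasDerivWithinAt G (g v) (Icc vlo vhi) v)
    (hg : ∀ v ∈ Ioc vlo vhi, g v ≠ 0)
    (hβ : ∀ v ∈ Icc vlo vhi, HasDerivWithinAt β (βd v) (Icc vlo vhi) v)
    (hβmono : MonotoneOn β (Icc vlo vhi))
    (hfoc : ∀ v ∈ Ioc vlo vhi, βd v * A (G v) = (v - β v) * g v)
    (hmem : MapsTo βinv (Icc (β vlo) (β vhi)) (Icc vlo vhi))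
    (hinv : InvOn βinv β (Icc vlo vhi) (Icc (β vlo) (β vhi)))
    (hF : ∀ b ∈ Icc (β vlo) (β vhi),
      HasDerivWithinAt (G ∘ βinv) (f b) (Icc (β vlo) (β vhi)) b) :
    ∀ b ∈ Ioc (β vlo) (β vhi), βinv b = b + A (G (βinv b)) / f b := by
  have hvalue : ∀ v ∈ Ioc vlo vhi, v = β v + A (G v) / f (β v) := by
    intro v hv
    have hvI : v ∈ Icc vlo vhi := Ioc_subset_Icc_self hv
    have hdensity : βd v * f (β v) = g v :=
      smul_eq_of_hasDerivWithinAt_comp_leftInvOn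
        (uniqueDiffOn_Icc (hv.1.trans_le hv.2) v hvI) hvI hβmono.mapsTo_Icc hinv.1
        (hβ v hvI) (hG v hvI) (hF (β v) (hβmono.mapsTo_Icc hvI))
    exact eq_add_div_of_mul_eq_sub_mul_mul (hdensity ▸ hg v hv) (hdensity ▸ hfoc v hv)
  intro b hb
  have hvI : βinv b ∈ Icc vlo vhi := hmem (Ioc_subset_Icc_self hb)
  have hβv : β (βinv b) = b := hinv.2 (Ioc_subset_Icc_self hb)
  have hlo : vlo < βinv b :=
    hβmono.reflect_lt (left_mem_Icc.2 (hvI.1.trans hvI.2)) hvI (hβv.symm ▸ hb.1)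
  simpa only [hβv] using hvalue (βinv b) ⟨hlo, hvI.2⟩

/-- Identification equation (iden1): for any continuously differentiable, strictly
increasing equilibrium strategy `β` satisfying the first-order condition, with bid CDF
`F = G ∘ β⁻¹` and bid density `f = F'`, the bidder's value is recovered from the bid by
`β⁻¹(b) = b + A(F(b))/f(b)`. -/
theorem inverse_bidding_strategy_identification
    (M : ℕ) (p : ℕ → ℝ) (hM : 2 ≤ M) (hbel : Beliefs M p)
    (G g : ℝ → ℝ) (vlo vhi : ℝ) (hG : Assumption1 G g vlo vhi)
    (β βd : ℝ → ℝ)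
    (hβderiv : ∀ x ∈ Set.Icc vlo vhi, HasDerivWithinAt β (βd x) (Set.Icc vlo vhi) x)
    (hβd_cont : ContinuousOn βd (Set.Icc vlo vhi))
    (hβmono : StrictMonoOn β (Set.Icc vlo vhi))
    (hβd_pos : ∀ x ∈ Set.Ioc vlo vhi, 0 < βd x)
    (hfoc : ∀ x ∈ Set.Ioc vlo vhi, βd x = (x - β x) * g x / Afun M p (G x))
    (βinv : ℝ → ℝ)
    (hβinv_mem : ∀ y ∈ Set.Icc (β vlo) (β vhi), βinv y ∈ Set.Icc vlo vhi)
    (hβinv_left : ∀ x ∈ Set.Icc vlo vhi, βinv (β x) = x)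
    (hβinv_right : ∀ y ∈ Set.Icc (β vlo) (β vhi), β (βinv y) = y)
    (f : ℝ → ℝ)
    (hf : ∀ y ∈ Set.Icc (β vlo) (β vhi),
      HasDerivWithinAt (fun z => G (βinv z)) (f y) (Set.Icc (β vlo) (β vhi)) y) :
    ∀ y ∈ Set.Ioc (β vlo) (β vhi), βinv y = y + Afun M p (G (βinv y)) / f y := by
  exact inverse_bidding_strategy_identification_general (A := Afun M p) hG.hasDeriv
    (fun v hv => (hG.density_pos v (Ioc_subset_Icc_self hv)).ne') hβderiv hβmono.monotoneOn
    (fun v hv => mul_eq_of_eq_div_of_ne_zero (hfoc v hv) (hβd_pos v hv).ne')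
    hβinv_mem ⟨hβinv_left, hβinv_right⟩ hf
end
end

section
/- Under Assumption 1 on the value distribution and non-degenerate beliefs, let r* ∈ [v̲, v̄), u* = G(r*), and a ∈ ℝ. Then the potential bidder's expected surplus satisfies both a·∫_{r*}^{v̄} (∫_{r*}^{v} A₁(G(x)) dx)·g(v) dv = a·∫_{r*}^{v̄} A₃(G(x)) dx (the integration-by-parts derivation of the surplus) and the quantile representation a·∫_{r*}^{v̄} A₃(G(x)) dx = −a·A₃(u*)·G⁻¹(u*) − a·∫_{u*}^{1} A₃'(z)·G⁻¹(z) dz. (Quantile form of the potential bidder's expected surplus, Table 1, row 2.) -/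
open MeasureTheory Set Filter

noncomputable section

/-!
Both identities are integrations by parts. In the first, the density is integrated to `G - 1`,
which vanishes at the top of the support, while the inner integral vanishes at `r*`: no boundary
term survives and the weight `1 - G` appears. In the second, the constant `1` is integrated to `x`,
the boundary term at the top vanishes because `A₃ 1 = 0`, and the remaining integral
`∫ x A₃'(G x) g(x) dx` is taken to quantiles by the substitution `z = G x`.
-/

section IntegrationByParts

variable {G g : ℝ → ℝ} {a b : ℝ}

theorem hasDerivAt_integral_right_of_continuousOn {h : ℝ → ℝ} (hh : ContinuousOn h (uIcc a b))
    {x : ℝ} (hx : x ∈ Ioo (min a b) (max a b)) :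
    HasDerivAt (fun v => ∫ t in a..v, h t) (h x) x := by
  have hx' : x ∈ uIcc a b := Ioo_subset_Icc_self hx
  have h_interior : ContinuousOn h (Ioo (min a b) (max a b)) := hh.mono Ioo_subset_Icc_self
  exact intervalIntegral.integral_hasDerivAt_right
    (hh.mono (uIcc_subset_uIcc_left hx')).intervalIntegrable
    (h_interior.stronglyMeasurableAtFilter isOpen_Ioo x hx)
    (h_interior.continuousAt (isOpen_Ioo.mem_nhds hx))

theorem integral_primitive_mul_deriv {h : ℝ → ℝ} (hh : ContinuousOn h (uIcc a b))
    (hGc : ContinuousOn G (uIcc a b))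
    (hGd : ∀ x ∈ Ioo (min a b) (max a b), HasDerivAt G (g x) x)
    (hg : IntervalIntegrable g volume a b) :
    ∫ v in a..b, (∫ x in a..v, h x) * g v = ∫ x in a..b, (G b - G x) * h x := by
  have h_int : IntervalIntegrable h volume a b := hh.intervalIntegrable
  have by_parts := intervalIntegral.integral_mul_deriv_eq_deriv_mul_of_hasDerivAt
    (v := fun x => G x - G b)
    (intervalIntegral.continuousOn_primitive_interval' h_int left_mem_uIcc)
    (hGc.sub continuousOn_const)
    (fun _ hx => hasDerivAt_integral_right_of_continuousOn hh hx)
    (fun x hx => (hGd x hx).sub_const (G b)) h_int hg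
  calc ∫ v in a..b, (∫ x in a..v, h x) * g v
      = -∫ x in a..b, h x * (G x - G b) := by
        simpa only [sub_self, mul_zero, intervalIntegral.integral_same, zero_mul, zero_sub]
          using by_parts
    _ = ∫ x in a..b, (G b - G x) * h x := by
        rw [← intervalIntegral.integral_neg]
        congr 1 with x
        ring

theorem integral_comp_eq_sub_integral_mul_deriv {f f' : ℝ → ℝ}
    (hf : ∀ z ∈ G '' uIcc a b, HasDerivAt f (f' z) z) (hf' : ContinuousOn f' (G '' uIcc a b))
    (hGc : ContinuousOn G (uIcc a b))
    (hGd : ∀ x ∈ Ioo (min a b) (max a b), HasDerivAt G (g x) x)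
    (hg : IntervalIntegrable g volume a b) :
    ∫ x in a..b, f (G x) = f (G b) * b - f (G a) * a - ∫ x in a..b, f' (G x) * g x * x := by
  have h_maps : MapsTo G (uIcc a b) (G '' uIcc a b) := mapsTo_image G _
  have hfG : ContinuousOn (fun x => f (G x)) (uIcc a b) :=
    ContinuousOn.comp (fun z hz => (hf z hz).continuousAt.continuousWithinAt) hGc h_maps
  have by_parts := intervalIntegral.integral_mul_deriv_eq_deriv_mul_of_hasDerivAt
    hfG continuousOn_id
    (fun x hx => (hf (G x) (h_maps (Ioo_subset_Icc_self hx))).comp x (hGd x hx))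
    (fun x _ => hasDerivAt_id x)
    (hg.continuousOn_mul (hf'.comp hGc h_maps)) intervalIntegrable_const
  simpa only [mul_one, id_eq, Function.comp_apply] using by_parts

theorem integral_comp_eq_sub_integral_mul_leftInvOn {f f' Ginv : ℝ → ℝ}
    (hf : ∀ z ∈ G '' uIcc a b, HasDerivAt f (f' z) z) (hf' : ContinuousOn f' (G '' uIcc a b))
    (hGc : ContinuousOn G (uIcc a b))
    (hGd : ∀ x ∈ Ioo (min a b) (max a b), HasDerivAt G (g x) x)
    (hg : ∀ x ∈ Ioo (min a b) (max a b), 0 ≤ g x) (hGinv : LeftInvOn Ginv G (uIcc a b)) :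
    ∫ x in a..b, f (G x) =
      f (G b) * b - f (G a) * a - ∫ z in G a..G b, f' z * Ginv z := by
  have change_of_variables : ∫ x in a..b, f' (G x) * g x * x = ∫ z in G a..G b, f' z * Ginv z := by
    rw [← intervalIntegral.integral_comp_mul_deriv_of_deriv_nonneg hGc hGd hg]
    refine intervalIntegral.integral_congr fun x hx => ?_
    simp only [Function.comp_apply, hGinv hx]
    ring
  rw [← change_of_variables]
  exact integral_comp_eq_sub_integral_mul_deriv hf hf' hGc hGd
    (intervalIntegral.intervalIntegrable_deriv_of_nonneg hGc hGd hg)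

end IntegrationByParts

theorem contDiff_A1 (M : ℕ) (p : ℕ → ℝ) {n : WithTop ℕ∞} : ContDiff ℝ n (A1 M p) := by
  unfold A1
  fun_prop

theorem Assumption1.hasDerivAt {G g : ℝ → ℝ} {vlo vhi x : ℝ} (hG : Assumption1 G g vlo vhi)
    (hx : x ∈ Ioo vlo vhi) : HasDerivAt G (g x) x :=
  (hG.hasDeriv x (Ioo_subset_Icc_self hx)).hasDerivAt (Icc_mem_nhds hx.1 hx.2)

theorem potential_bidder_surplus_quantile_form_general {A G g Ginv : ℝ → ℝ} {r b : ℝ}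
    (hA : ContDiff ℝ 1 A) (hGc : ContinuousOn G (uIcc r b))
    (hGd : ∀ x ∈ Ioo (min r b) (max r b), HasDerivAt G (g x) x)
    (hg : ∀ x ∈ Ioo (min r b) (max r b), 0 ≤ g x) (hGb : G b = 1)
    (hGinv : LeftInvOn Ginv G (uIcc r b)) (a : ℝ) :
    (a * ∫ v in r..b, (∫ x in r..v, A (G x)) * g v = a * ∫ x in r..b, (1 - G x) * A (G x)) ∧
    (a * ∫ x in r..b, (1 - G x) * A (G x) =
      -(a * ((1 - G r) * A (G r)) * Ginv (G r)) -
        a * ∫ z in (G r)..1, deriv (fun u => (1 - u) * A u) z * Ginv z) := by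
  have h_surplus := integral_primitive_mul_deriv (hA.continuous.comp_continuousOn hGc) hGc hGd
    (intervalIntegral.intervalIntegrable_deriv_of_nonneg hGc hGd hg)
  have hA₃ : ContDiff ℝ 1 (fun u => (1 - u) * A u) := by fun_prop
  have h_quantile := integral_comp_eq_sub_integral_mul_leftInvOn
    (fun z _ => (hA₃.differentiable one_ne_zero z).hasDerivAt)
    (hA₃.continuous_deriv le_rfl).continuousOn hGc hGd hg hGinv
  rw [hGb] at h_surplus h_quantile
  refine ⟨congrArg (a * ·) h_surplus, ?_⟩
  rw [h_quantile, hGinv left_mem_uIcc]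
  ring

/-- Quantile form of the potential bidder's expected surplus (Table 1, row 2): for
`r* ∈ [v̲, v̄)`, `u* = G(r*)` and any `a`, both
`a ∫_{r*}^{v̄} (∫_{r*}^v A₁(G(x)) dx) g(v) dv = a ∫_{r*}^{v̄} A₃(G(x)) dx` and
`a ∫_{r*}^{v̄} A₃(G(x)) dx = -a A₃(u*) G⁻¹(u*) - a ∫_{u*}^1 A₃'(z) G⁻¹(z) dz`. -/
theorem potential_bidder_surplus_quantile_form
    (M : ℕ) (p : ℕ → ℝ) (hM : 2 ≤ M) (hbel : Beliefs M p)
    (G g : ℝ → ℝ) (vlo vhi : ℝ) (hG : Assumption1 G g vlo vhi)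
    (Ginv : ℝ → ℝ)
    (hGinv_mem : ∀ u ∈ Set.Icc (0 : ℝ) 1, Ginv u ∈ Set.Icc vlo vhi)
    (hGinv_right : ∀ u ∈ Set.Icc (0 : ℝ) 1, G (Ginv u) = u)
    (hGinv_left : ∀ x ∈ Set.Icc vlo vhi, Ginv (G x) = x)
    (rstar : ℝ) (hrstar : rstar ∈ Set.Ico vlo vhi) (a : ℝ) :
    (a * ∫ v in rstar..vhi, (∫ x in rstar..v, A1 M p (G x)) * g v =
      a * ∫ x in rstar..vhi, A3 M p (G x)) ∧
    (a * ∫ x in rstar..vhi, A3 M p (G x) =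
      -(a * A3 M p (G rstar) * Ginv (G rstar)) -
        a * ∫ z in (G rstar)..1, deriv (A3 M p) z * Ginv z) := by
  have hlo : vlo ≤ min rstar vhi := le_min hrstar.1 hG.lo_lt_hi.le
  have hhi : max rstar vhi ≤ vhi := max_le hrstar.2.le le_rfl
  have h_Icc : uIcc rstar vhi ⊆ Icc vlo vhi := Icc_subset_Icc hlo hhi
  have h_Ioo : Ioo (min rstar vhi) (max rstar vhi) ⊆ Ioo vlo vhi := Ioo_subset_Ioo hlo hhi
  exact potential_bidder_surplus_quantile_form_general (contDiff_A1 M p)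
    (hG.smooth.continuousOn.mono h_Icc) (fun _ hx => hG.hasDerivAt (h_Ioo hx))
    (fun x hx => (hG.density_pos x (h_Icc (Ioo_subset_Icc_self hx))).le) (hG.eq_one vhi le_rfl)
    (fun x hx => hGinv_left x (h_Icc hx)) a
end
end

section
/- Let (Z_n) and (Z̃_n) be sequences of real random variables with E Z̃_n ≥ 0, and let r_n → 0 be positive constants such that |Z_n − Z̃_n| = O_P(r_n) (i.e., for every ε > 0 there is a constant B with limsup_n P(|Z_n − Z̃_n| > B·r_n) ≤ ε) and r_n·E Z̃_n → 0. Suppose each Z̃_n satisfies the anti-concentration bound: there is a constant C independent of n such that for every n, every t ∈ ℝ and every ε > 0, P(t < Z̃_n ≤ t + ε) ≤ C·ε·(E Z̃_n + √(1 ∨ log(1/ε))). Then sup_{t ∈ ℝ} |P(Z_n ≤ t) − P(Z̃_n ≤ t)| → 0 as n → ∞. (Lemma 4 of the Appendix: extension of Lemma 2.4 of Chernozhukov–Chetverikov–Kato to generic coupled sequences.) -/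
/-!
Off the event `s < |X - Y|`, the events `X ≤ t` and `Y ≤ t` can differ only where `Y` lies in an
interval of length `s` with endpoint `t`. Hence the Kolmogorov distance of `X` and `Y` is at most
`sup_t P(t < Y ≤ t + s) + P(s < |X - Y|)`. Take `s = b r_n`: stochastic boundedness makes the second
term small for `b` large, and for that fixed `b` the first term tends to zero by anti-concentration,
because `s √(1 ∨ log (1 / s)) → 0` as `s → 0`.
-/

open MeasureTheory Set Filter

noncomputable section

section KolmogorovDistance

variable {Ω : Type*} [MeasurableSpace Ω]

/-- The Kolmogorov distance between the laws of `X` and `Y`. It is written through the events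
`X ≤ t` and `Y ≤ t` rather than through pushforward measures, which vanish on functions that are
not a.e. measurable. -/
def kolmogorovDist (μ : Measure Ω) (X Y : Ω → ℝ) : ℝ :=
  ⨆ t : ℝ, |μ.real {ω | X ω ≤ t} - μ.real {ω | Y ω ≤ t}|

/-- Lévy's concentration function of `X`: the largest mass of a window `(t, t + s]`. Half-open
windows make it the largest increment of the distribution function over a step of length `s`. -/
def levyConcentration (μ : Measure Ω) (X : Ω → ℝ) (s : ℝ) : ℝ :=
  ⨆ t : ℝ, μ.real {ω | t < X ω ∧ X ω ≤ t + s}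

lemma kolmogorovDist_nonneg (μ : Measure Ω) (X Y : Ω → ℝ) : 0 ≤ kolmogorovDist μ X Y :=
  Real.iSup_nonneg fun _ => abs_nonneg _

lemma levyConcentration_nonneg (μ : Measure Ω) (X : Ω → ℝ) (s : ℝ) :
    0 ≤ levyConcentration μ X s :=
  Real.iSup_nonneg fun _ => measureReal_nonneg

variable (μ : Measure Ω) [IsFiniteMeasure μ] (X Y : Ω → ℝ) (s t : ℝ)

lemma measureReal_Ioc_le_levyConcentration :
    μ.real {ω | t < X ω ∧ X ω ≤ t + s} ≤ levyConcentration μ X s :=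
  le_ciSup (f := fun t : ℝ => μ.real {ω | t < X ω ∧ X ω ≤ t + s})
    ⟨μ.real univ, forall_mem_range.2 fun _ => measureReal_mono (subset_univ _)⟩ t

lemma measureReal_setOf_le_add_le_add_levyConcentration :
    μ.real {ω | X ω ≤ t + s} ≤ μ.real {ω | X ω ≤ t} + levyConcentration μ X s := by
  have hsub : {ω | X ω ≤ t + s} ⊆ {ω | X ω ≤ t} ∪ {ω | t < X ω ∧ X ω ≤ t + s} :=
    fun ω hω => (le_or_gt (X ω) t).imp id fun ht => ⟨ht, hω⟩
  calc μ.real {ω | X ω ≤ t + s}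
      ≤ μ.real {ω | X ω ≤ t} + μ.real {ω | t < X ω ∧ X ω ≤ t + s} :=
        (measureReal_mono hsub).trans (measureReal_union_le _ _)
    _ ≤ μ.real {ω | X ω ≤ t} + levyConcentration μ X s := by
        gcongr
        exact measureReal_Ioc_le_levyConcentration μ X s t

lemma measureReal_setOf_le_le_add_measureReal_lt_abs_sub :
    μ.real {ω | X ω ≤ t} ≤ μ.real {ω | Y ω ≤ t + s} + μ.real {ω | s < |X ω - Y ω|} := by
  have hsub : {ω | X ω ≤ t} ⊆ {ω | Y ω ≤ t + s} ∪ {ω | s < |X ω - Y ω|} := by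
    intro ω (hX : X ω ≤ t)
    refine (le_or_gt |X ω - Y ω| s).imp (fun hs => ?_) id
    change Y ω ≤ t + s
    linarith [neg_le_of_abs_le hs]
  exact (measureReal_mono hsub).trans (measureReal_union_le _ _)

theorem kolmogorovDist_le_levyConcentration_add :
    kolmogorovDist μ X Y ≤ levyConcentration μ Y s + μ.real {ω | s < |X ω - Y ω|} := by
  refine ciSup_le fun t => abs_sub_le_iff.2 ⟨?_, ?_⟩
  · linarith [measureReal_setOf_le_le_add_measureReal_lt_abs_sub μ X Y s t,
      measureReal_setOf_le_add_le_add_levyConcentration μ Y s t]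
  · have hshift := measureReal_setOf_le_le_add_measureReal_lt_abs_sub μ Y X s (t - s)
    have hwindow := measureReal_setOf_le_add_le_add_levyConcentration μ Y s (t - s)
    simp only [sub_add_cancel, abs_sub_comm (Y _)] at hshift hwindow
    linarith

end KolmogorovDistance

section SqrtLog

lemma sqrt_max_one_log_one_div_le (s : ℝ) : √(max 1 (Real.log (1 / s))) ≤ 1 + |Real.log s| := by
  have hmax : max 1 (Real.log (1 / s)) ≤ 1 + |Real.log s| := by
    rw [one_div, Real.log_inv]
    exact max_le (by linarith [abs_nonneg (Real.log s)]) (by linarith [neg_le_abs (Real.log s)])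
  exact (Real.sqrt_le_self_iff.2 (Or.inr (le_max_left _ _))).trans hmax

lemma tendsto_mul_sqrt_max_one_log_one_div :
    Tendsto (fun s : ℝ => s * √(max 1 (Real.log (1 / s)))) (nhds 0) (nhds 0) := by
  have hmajorant : Tendsto (fun s : ℝ => |s| + |s * Real.log s|) (nhds 0) (nhds 0) := by
    have hcont : Continuous fun s : ℝ => |s| + |s * Real.log s| :=
      continuous_abs.add Real.continuous_mul_log.abs
    simpa using hcont.tendsto 0
  refine squeeze_zero_norm (fun s => ?_) hmajorant
  calc ‖s * √(max 1 (Real.log (1 / s)))‖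
      = |s| * √(max 1 (Real.log (1 / s))) := by
        rw [Real.norm_eq_abs, abs_mul, abs_of_nonneg (Real.sqrt_nonneg _)]
    _ ≤ |s| * (1 + |Real.log s|) := by
        gcongr
        exact sqrt_max_one_log_one_div_le s
    _ = |s| + |s * Real.log s| := by rw [abs_mul, mul_one_add]

end SqrtLog

section Convergence

variable {ι : Type*} {Ω : ι → Type*} [∀ i, MeasurableSpace (Ω i)]

/-- Stochastic boundedness `X = O_P(r)` along the filter `l`, with a positive constant. It is stated
with an eventual bound, so that it does not involve a real `limsup`, whose value is junk for an
unbounded family. -/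
def IsBigOInProbability (μ : ∀ i, Measure (Ω i)) (X : ∀ i, Ω i → ℝ) (r : ι → ℝ)
    (l : Filter ι) : Prop :=
  ∀ ε : ℝ, 0 < ε → ∃ b : ℝ, 0 < b ∧ ∀ᶠ i in l, (μ i).real {ω | b * r i < |X i ω|} < ε

variable {μ : ∀ i, Measure (Ω i)} {X Y : ∀ i, Ω i → ℝ} {r : ι → ℝ} {l : Filter ι}

lemma IsBigOInProbability.of_limsup_le [∀ i, IsZeroOrProbabilityMeasure (μ i)]
    (hr : ∀ i, 0 ≤ r i)
    (hlimsup : ∀ ε : ℝ, 0 < ε → ∃ B : ℝ,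
      limsup (fun i => (μ i).real {ω | B * r i < |X i ω|}) l ≤ ε) :
    IsBigOInProbability μ X r l := by
  intro ε hε
  obtain ⟨B, hB⟩ := hlimsup (ε / 2) (half_pos hε)
  have hbounded : IsBoundedUnder (· ≤ ·) l fun i => (μ i).real {ω | B * r i < |X i ω|} :=
    isBoundedUnder_of ⟨1, fun _ => measureReal_le_one⟩
  refine ⟨max B 1, by positivity, ?_⟩
  filter_upwards [eventually_lt_of_limsup_lt (hB.trans_lt (half_lt_self hε)) hbounded] with i hi
  refine (measureReal_mono fun ω hω => ?_).trans_lt hi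
  exact (mul_le_mul_of_nonneg_right (le_max_left B 1) (hr i)).trans_lt hω

theorem tendsto_kolmogorovDist_of_isBigOInProbability [∀ i, IsFiniteMeasure (μ i)]
    (hXY : IsBigOInProbability μ (fun i ω => X i ω - Y i ω) r l)
    (hY : ∀ b : ℝ, 0 < b → Tendsto (fun i => levyConcentration (μ i) (Y i) (b * r i)) l (nhds 0)) :
    Tendsto (fun i => kolmogorovDist (μ i) (X i) (Y i)) l (nhds 0) := by
  refine tendsto_order.2 ⟨fun a ha => .of_forall fun i => ha.trans_le (kolmogorovDist_nonneg _ _ _),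
    fun δ hδ => ?_⟩
  obtain ⟨b, hb, hfar⟩ := hXY (δ / 2) (half_pos hδ)
  filter_upwards [hfar, (hY b hb).eventually_lt_const (half_pos hδ)] with i hfar_i hconc_i
  linarith [kolmogorovDist_le_levyConcentration_add (μ i) (X i) (Y i) (b * r i)]

theorem tendsto_levyConcentration_of_anticoncentration {C : ℝ} {m s : ι → ℝ}
    (hs_pos : ∀ i, 0 < s i) (hs : Tendsto s l (nhds 0))
    (hsm : Tendsto (fun i => s i * m i) l (nhds 0))
    (hanti : ∀ (i : ι) (t ε : ℝ), 0 < ε →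
      (μ i).real {ω | t < Y i ω ∧ Y i ω ≤ t + ε} ≤
        C * ε * (m i + √(max 1 (Real.log (1 / ε))))) :
    Tendsto (fun i => levyConcentration (μ i) (Y i) (s i)) l (nhds 0) := by
  have hbound : Tendsto (fun i => C * s i * (m i + √(max 1 (Real.log (1 / s i))))) l (nhds 0) := by
    simpa [mul_assoc, mul_add] using
      (hsm.add (tendsto_mul_sqrt_max_one_log_one_div.comp hs)).const_mul C
  exact squeeze_zero (fun i => levyConcentration_nonneg _ _ _)
    (fun i => ciSup_le fun t => hanti i t (s i) (hs_pos i)) hbound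

theorem kolmogorov_convergence_from_coupling_sequences_general
    [∀ i, IsZeroOrProbabilityMeasure (μ i)] {C : ℝ} {m : ι → ℝ}
    (hr_pos : ∀ i, 0 < r i) (hr : Tendsto r l (nhds 0))
    (hXY : ∀ ε : ℝ, 0 < ε → ∃ B : ℝ,
      limsup (fun i => (μ i).real {ω | B * r i < |X i ω - Y i ω|}) l ≤ ε)
    (hrm : Tendsto (fun i => r i * m i) l (nhds 0))
    (hanti : ∀ (i : ι) (t ε : ℝ), 0 < ε →
      (μ i).real {ω | t < Y i ω ∧ Y i ω ≤ t + ε} ≤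
        C * ε * (m i + √(max 1 (Real.log (1 / ε))))) :
    Tendsto (fun i => kolmogorovDist (μ i) (X i) (Y i)) l (nhds 0) := by
  refine tendsto_kolmogorovDist_of_isBigOInProbability
    (.of_limsup_le (fun i => (hr_pos i).le) hXY) fun b hb => ?_
  refine tendsto_levyConcentration_of_anticoncentration (fun i => mul_pos hb (hr_pos i)) ?_ ?_ hanti
  · simpa using hr.const_mul b
  · simpa [mul_assoc] using hrm.const_mul b

end Convergence

/-- Lemma 4 of the Appendix (extension of Lemma 2.4 of Chernozhukov–Chetverikov–Kato):
if `|Z_n - Z̃_n| = O_P(r_n)` with `r_n → 0`, `E Z̃_n ≥ 0`, `r_n E Z̃_n → 0`, and each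
`Z̃_n` satisfies the Gaussian-type anti-concentration bound with a constant independent
of `n`, then the Kolmogorov distance between `Z_n` and `Z̃_n` tends to zero. -/
theorem kolmogorov_convergence_from_coupling_sequences
    {Ω : ℕ → Type*} [∀ n, MeasurableSpace (Ω n)]
    (P : ∀ n, Measure (Ω n)) [∀ n, IsProbabilityMeasure (P n)]
    (Z Z' : ∀ n, Ω n → ℝ)
    (hZ : ∀ n, Measurable (Z n)) (hZ' : ∀ n, Measurable (Z' n))
    (hmean_nonneg : ∀ n, 0 ≤ ∫ ω, Z' n ω ∂P n)
    (r : ℕ → ℝ) (hr_pos : ∀ n, 0 < r n) (hr0 : Tendsto r atTop (nhds 0))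
    -- |Z_n - Z̃_n| = O_P(r_n)
    (hOP : ∀ ε : ℝ, 0 < ε → ∃ B : ℝ,
      Filter.limsup
        (fun n => ((P n) {ω | B * r n < |Z n ω - Z' n ω|}).toReal) atTop ≤ ε)
    -- r_n · E Z̃_n → 0
    (hrE : Tendsto (fun n => r n * ∫ ω, Z' n ω ∂P n) atTop (nhds 0))
    -- anti-concentration, uniformly in n
    (hanti : ∃ C : ℝ, ∀ (n : ℕ) (t ε : ℝ), 0 < ε →
      ((P n) {ω | t < Z' n ω ∧ Z' n ω ≤ t + ε}).toReal ≤
        C * ε * ((∫ ω, Z' n ω ∂P n) + Real.sqrt (max 1 (Real.log (1 / ε))))) :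
    Tendsto
      (fun n => ⨆ t : ℝ,
        |((P n) {ω | Z n ω ≤ t}).toReal - ((P n) {ω | Z' n ω ≤ t}).toReal|)
      atTop (nhds 0) := by
  obtain ⟨C, hC⟩ := hanti
  exact kolmogorov_convergence_from_coupling_sequences_general hr_pos hr0 hOP hrE hC
end
end
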